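/- Let p ∈ ℕ with p ≥ 2, let ξ ∈ ℝ, and let φ ∈ C^∞(ℝ). Define the operator T by (Tψ)(y) = d/dy ( ψ(y) / (p y^{p−1} − ξ) ) on the open set Ω = { y ∈ ℝ : p y^{p−1} ≠ ξ }. Then for every integer m ≥ 1 there exists a finitely supported family of real constants (C_{s,ℓ,n}) indexed by (s,ℓ,n) ∈ ℕ × ℕ × ℕ, depending only on p and m (not on ξ or φ), with C_{s,ℓ,n} = 0 unless n ≥ m and (p−1)n − s ≥ (p−1)m, such that for all y ∈ Ω: T^m φ(y) = Σ_{(s,ℓ,n)} C_{s,ℓ,n} · y^s · φ^{(ℓ)}(y) / (p y^{p−1} − ξ)^n. -/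

import Mathlib

namespace Stmt12

/-- The operator `(Tψ)(y) = d/dy ( ψ(y) / (p y^{p−1} − ξ) )`. -/
noncomputable def T (p : ℕ) (ξ : ℝ) (ψ : ℝ → ℝ) : ℝ → ℝ :=
  fun y => deriv (fun z => ψ z / ((p : ℝ) * z ^ (p - 1) - ξ)) y

/-- index set -/
def idx (p m : ℕ) : Set (ℕ × ℕ × ℕ) :=
  {t | m ≤ t.2.2 ∧ t.1 + (p - 1) * m ≤ (p - 1) * t.2.2}

/-- basic monomials -/
noncomputable def w (p : ℕ) (ξ : ℝ) (φ : ℝ → ℝ) (y : ℝ) (t : ℕ × ℕ × ℕ) : ℝ :=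
  y ^ t.1 * iteratedDeriv t.2.1 φ y / ((p : ℝ) * y ^ (p - 1) - ξ) ^ t.2.2

/-- the action of `T` on one monomial -/
noncomputable def stp (p : ℕ) (t : ℕ × ℕ × ℕ) : (ℕ × ℕ × ℕ) →₀ ℝ :=
  Finsupp.single (t.1 - 1, t.2.1, t.2.2 + 1) (t.1 : ℝ)
  + Finsupp.single (t.1, t.2.1 + 1, t.2.2 + 1) 1
  + Finsupp.single (t.1 + (p - 1 - 1), t.2.1, t.2.2 + 2)
      (-((t.2.2 + 1 : ℕ) : ℝ) * (p * (p - 1 : ℕ)))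

theorem stp_mem (p : ℕ) (hp : 2 ≤ p) (m : ℕ) (t : ℕ × ℕ × ℕ) (ht : t ∈ idx p m) :
    stp p t ∈ Finsupp.supported ℝ ℝ (idx p (m + 1)) := by
  obtain ⟨q, rfl⟩ : ∃ q, p = q + 2 := ⟨p - 2, by omega⟩
  obtain ⟨s, l, n⟩ := t
  simp only [idx, Set.mem_ofPred_eq] at ht
  obtain ⟨h1, h2⟩ := ht
  have e : q + 2 - 1 = q + 1 := rfl
  rw [e] at h2
  unfold stp
  refine Submodule.add_mem _ (Submodule.add_mem _ ?_ ?_) ?_ <;>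
    apply Finsupp.single_mem_supported <;> simp only [idx, Set.mem_ofPred_eq, e]
  · refine ⟨by omega, ?_⟩
    have : s - 1 ≤ s := Nat.sub_le _ _
    nlinarith
  · exact ⟨by omega, by nlinarith⟩
  · refine ⟨by omega, ?_⟩
    have : q + 1 - 1 = q := rfl
    rw [this]
    nlinarith

theorem w_deriv (p : ℕ) (ξ : ℝ) (φ : ℝ → ℝ) (hφ : ContDiff ℝ (⊤ : ℕ∞) φ)
    (t : ℕ × ℕ × ℕ) (y : ℝ) (hy : (p : ℝ) * y ^ (p - 1) - ξ ≠ 0) :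
    HasDerivAt (fun z => w p ξ φ z t / ((p : ℝ) * z ^ (p - 1) - ξ))
      (Finsupp.linearCombination ℝ (w p ξ φ y) (stp p t)) y := by
  obtain ⟨s, l, n⟩ := t
  have hD : HasDerivAt (fun z : ℝ => (p : ℝ) * z ^ (p - 1) - ξ)
      ((p : ℝ) * (((p - 1 : ℕ) : ℝ) * y ^ (p - 1 - 1))) y :=
    ((hasDerivAt_pow (p - 1) y).const_mul (p : ℝ)).sub_const ξ
  have hl : HasDerivAt (iteratedDeriv l φ) (iteratedDeriv (l + 1) φ y) y := by
    rw [iteratedDeriv_succ]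
    apply DifferentiableAt.hasDerivAt
    exact (hφ.differentiable_iteratedDeriv l (by exact_mod_cast WithTop.coe_lt_top l)) y
  have h := ((hasDerivAt_pow s y).fun_mul hl).fun_div (hD.fun_pow (n + 1)) (pow_ne_zero _ hy)
  have hf : (fun z => w p ξ φ z (s, l, n) / ((p : ℝ) * z ^ (p - 1) - ξ)) =
      fun z => z ^ s * iteratedDeriv l φ z / ((p : ℝ) * z ^ (p - 1) - ξ) ^ (n + 1) := by
    funext z
    simp only [w, div_div, pow_succ]
  rw [hf]
  refine h.congr_deriv (Eq.symm ?_)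
  simp only [stp, map_add, Finsupp.linearCombination_single, w, smul_eq_mul, Nat.add_sub_cancel]
  generalize (p : ℝ) * y ^ (p - 1) - ξ = D at hy
  rw [pow_add y s]
  field_simp
  ring

theorem T_iter (p : ℕ) (hp : 2 ≤ p) (m : ℕ) :
    ∃ C : (ℕ × ℕ × ℕ) →₀ ℝ, C ∈ Finsupp.supported ℝ ℝ (idx p m) ∧
      ∀ ξ : ℝ, ∀ φ : ℝ → ℝ, ContDiff ℝ (⊤ : ℕ∞) φ →
        ∀ y : ℝ, (p : ℝ) * y ^ (p - 1) - ξ ≠ 0 →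
          (T p ξ)^[m] φ y = Finsupp.linearCombination ℝ (w p ξ φ y) C := by
  induction m with
  | zero =>
    refine ⟨Finsupp.single (0, 0, 0) 1, ?_, ?_⟩
    · apply Finsupp.single_mem_supported
      simp [idx]
    · intro ξ φ _ y _
      simp [w]
  | succ m ih =>
    obtain ⟨C, hC, h⟩ := ih
    refine ⟨∑ t ∈ C.support, C t • stp p t, ?_, ?_⟩
    · refine Submodule.sum_mem _ fun t ht => Submodule.smul_mem _ _ (stp_mem p hp m t ?_)
      exact (Finsupp.mem_supported ℝ C).1 hC ht
    · intro ξ φ hφ y hy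
      rw [Function.iterate_succ_apply', T]
      have hev : (fun z => (T p ξ)^[m] φ z / ((p : ℝ) * z ^ (p - 1) - ξ)) =ᶠ[nhds y]
          fun z => ∑ t ∈ C.support, C t * (w p ξ φ z t / ((p : ℝ) * z ^ (p - 1) - ξ)) := by
        have hc : ContinuousAt (fun z : ℝ => (p : ℝ) * z ^ (p - 1) - ξ) y := by fun_prop
        filter_upwards [hc.eventually_ne hy] with z hz
        rw [h ξ φ hφ z hz, Finsupp.linearCombination_apply, Finsupp.sum, Finset.sum_div]
        simp only [smul_eq_mul, mul_div_assoc]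
      rw [hev.deriv_eq]
      rw [(HasDerivAt.fun_sum fun t _ => (w_deriv p ξ φ hφ t y hy).const_mul (C t)).deriv]
      simp only [map_sum, map_smul, smul_eq_mul]

/-- Lemma `Tlemma`, integer case.  For `p ≥ 2` and `m ≥ 1` there is a
finitely supported family of real constants `C_{s,ℓ,n}`, depending only on `p` and `m`,
vanishing unless `n ≥ m` and `(p−1)n − s ≥ (p−1)m`, such that for every `ξ ∈ ℝ`, every
`φ ∈ C^∞(ℝ)` and every `y` with `p y^{p−1} ≠ ξ`,
`T^m φ(y) = Σ C_{s,ℓ,n} y^s φ^{(ℓ)}(y) / (p y^{p−1} − ξ)^n`. -/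
theorem stmt_12 (p : ℕ) (hp : 2 ≤ p) (m : ℕ) (hm : 1 ≤ m) :
    ∃ C : (ℕ × ℕ × ℕ) →₀ ℝ,
      (∀ s ℓ n : ℕ, C (s, ℓ, n) ≠ 0 → m ≤ n ∧ s + (p - 1) * m ≤ (p - 1) * n) ∧
      ∀ ξ : ℝ, ∀ φ : ℝ → ℝ, ContDiff ℝ (⊤ : ℕ∞) φ →
        ∀ y : ℝ, (p : ℝ) * y ^ (p - 1) ≠ ξ →
          (T p ξ)^[m] φ y
            = C.sum fun t c =>
                c * y ^ t.1 * iteratedDeriv t.2.1 φ y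
                  / ((p : ℝ) * y ^ (p - 1) - ξ) ^ t.2.2 := by
  obtain ⟨C, hC, h⟩ := T_iter p hp m
  refine ⟨C, ?_, ?_⟩
  · intro s l n hne
    exact (Finsupp.mem_supported ℝ C).1 hC (Finsupp.mem_support_iff.2 hne)
  · intro ξ φ hφ y hy
    rw [h ξ φ hφ y (sub_ne_zero.2 hy), Finsupp.linearCombination_apply]
    refine Finset.sum_congr rfl fun t _ => ?_
    simp only [w, smul_eq_mul, mul_assoc, mul_div_assoc]

end Stmt12
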